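/- Suppose g is monotone in the sense ⟨g(y₁) − g(y₂), y₁ − y₂⟩ ≤ 0 for all y₁, y₂ ∈ Ω, and L-Lipschitz: ‖g(y₁) − g(y₂)‖ ≤ L‖y₁ − y₂‖ for all y₁, y₂ ∈ Ω. Suppose some y* ∈ Ω solves the variational inequality ⟨g(y*), y − y*⟩ ≤ 0 for all y ∈ Ω. Let 0 < t < (√2·L)⁻¹ and define the extra pseudo-gradient sequence ŷ_s = P_Ω(y_s + t·g(y_s)), y_{s+1} = P_Ω(y_s + t·g(ŷ_s)) from any y₀ ∈ Ω. Then the series Σ_{s=0}^∞ ‖y_s − ŷ_s‖² and Σ_{s=0}^∞ ‖ŷ_s − y_{s+1}‖² converge; in particular ‖y_s − ŷ_s‖ → 0 and ‖ŷ_s − y_{s+1}‖ → 0 as s → ∞. -/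

import Mathlib

open Matrix Filter
open scoped BigOperators

noncomputable section

/-- Vectors in ℝ^k. -/
abbrev Vec (k : ℕ) := Fin k → ℝ

/-- Standard Euclidean inner product on ℝ^k. -/
def ip {k : ℕ} (u v : Vec k) : ℝ := ∑ i, u i * v i

/-- Standard Euclidean norm on ℝ^k. -/
def nrm {k : ℕ} (u : Vec k) : ℝ := Real.sqrt (ip u u)

/-- The space ℝⁿ × ℝⁿ × ℝᵐ of triples y = (x, λ, v). -/
abbrev Triple (n m : ℕ) := Vec n × Vec n × Vec m

/-- Euclidean inner product on the triple space. -/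
def ipT {n m : ℕ} (y z : Triple n m) : ℝ :=
  ip y.1 z.1 + ip y.2.1 z.2.1 + ip y.2.2 z.2.2

/-- Euclidean norm on the triple space. -/
def nrmT {n m : ℕ} (y : Triple n m) : ℝ := Real.sqrt (ipT y y)

/-- Ω = ℝ₊ⁿ × ℝ₊ⁿ × ℝ₊ᵐ. -/
def Om (n m : ℕ) : Set (Triple n m) :=
  {y | (∀ j, 0 ≤ y.1 j) ∧ (∀ j, 0 ≤ y.2.1 j) ∧ (∀ i, 0 ≤ y.2.2 i)}

/-- The operator g(x, λ, v) = ((I − A)ᵀλ − p(x) − Bᵀv, c(λ) − (I − A)x, Bx − r(v)). -/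
def gOp {n m : ℕ} (A : Matrix (Fin n) (Fin n) ℝ) (B : Matrix (Fin m) (Fin n) ℝ)
    (p c : Vec n → Vec n) (r : Vec m → Vec m) (y : Triple n m) : Triple n m :=
  ((1 - A)ᵀ *ᵥ y.2.1 - p y.1 - Bᵀ *ᵥ y.2.2,
   c y.2.1 - (1 - A) *ᵥ y.1,
   B *ᵥ y.1 - r y.2.2)

/-- P_Ω : componentwise positive part (Euclidean projection onto Ω). -/
def projOm {n m : ℕ} (y : Triple n m) : Triple n m :=
  (fun j => max (y.1 j) 0, fun j => max (y.2.1 j) 0, fun i => max (y.2.2 i) 0)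

theorem ip_add_l {k : ℕ} (u v w : Vec k) : ip (u + v) w = ip u w + ip v w := by
  simp [ip, add_mul, Finset.sum_add_distrib]

theorem ip_sub_l {k : ℕ} (u v w : Vec k) : ip (u - v) w = ip u w - ip v w := by
  simp [ip, sub_mul, Finset.sum_sub_distrib]

theorem ip_smul_l {k : ℕ} (t : ℝ) (u w : Vec k) : ip (t • u) w = t * ip u w := by
  simp [ip, mul_assoc, Finset.mul_sum]

theorem ip_comm' {k : ℕ} (u w : Vec k) : ip u w = ip w u := by
  simp [ip, mul_comm]

theorem ip_self_nonneg {k : ℕ} (u : Vec k) : 0 ≤ ip u u :=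
  Finset.sum_nonneg fun i _ => mul_self_nonneg (u i)

theorem ip_proj {k : ℕ} (u z : Vec k) (hz : ∀ i, 0 ≤ z i) :
    ip (u - fun i => max (u i) 0) (z - fun i => max (u i) 0) ≤ 0 := by
  apply Finset.sum_nonpos
  intro i _
  simp only [Pi.sub_apply]
  have := hz i
  rcases le_total (u i) 0 with h | h
  · rw [max_eq_right h]; nlinarith
  · rw [max_eq_left h]; simp

section
variable {n m : ℕ}

theorem ipT_add_l (u v w : Triple n m) : ipT (u + v) w = ipT u w + ipT v w := by
  simp only [ipT, Prod.fst_add, Prod.snd_add, ip_add_l]; ring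

theorem ipT_sub_l (u v w : Triple n m) : ipT (u - v) w = ipT u w - ipT v w := by
  simp only [ipT, Prod.fst_sub, Prod.snd_sub, ip_sub_l]; ring

theorem ipT_smul_l (t : ℝ) (u w : Triple n m) : ipT (t • u) w = t * ipT u w := by
  simp only [ipT, Prod.smul_fst, Prod.smul_snd, ip_smul_l]; ring

theorem ipT_comm' (u w : Triple n m) : ipT u w = ipT w u := by
  simp only [ipT]
  rw [ip_comm' u.1, ip_comm' u.2.1, ip_comm' u.2.2]

theorem ipT_sub_r (u v w : Triple n m) : ipT w (u - v) = ipT w u - ipT w v := by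
  rw [ipT_comm', ipT_sub_l, ipT_comm' u, ipT_comm' v]

theorem ipT_smul_r (t : ℝ) (u w : Triple n m) : ipT w (t • u) = t * ipT w u := by
  rw [ipT_comm', ipT_smul_l, ipT_comm' u]

theorem ipT_self_nonneg (u : Triple n m) : 0 ≤ ipT u u :=
  add_nonneg (add_nonneg (ip_self_nonneg _) (ip_self_nonneg _)) (ip_self_nonneg _)

theorem nrmT_sq (u : Triple n m) : nrmT u ^ 2 = ipT u u := Real.sq_sqrt (ipT_self_nonneg u)

theorem ipT_proj (u z : Triple n m) (hz : z ∈ Om n m) :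
    ipT (u - projOm u) (z - projOm u) ≤ 0 :=
  add_nonpos (add_nonpos (ip_proj _ _ hz.1) (ip_proj _ _ hz.2.1)) (ip_proj _ _ hz.2.2)

theorem projOm_mem (u : Triple n m) : projOm u ∈ Om n m :=
  ⟨fun _ => le_max_right _ _, fun _ => le_max_right _ _, fun _ => le_max_right _ _⟩

theorem step_ineq (a b d z ga gb gz : Triple n m) (t K : ℝ) (ht : 0 < t)
    (h1 : ipT (a + t • gb - d) (z - d) ≤ 0)
    (h2 : ipT (a + t • ga - b) (d - b) ≤ 0)
    (h3 : ipT (gb - gz) (b - z) ≤ 0)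
    (h4 : ipT gz (b - z) ≤ 0)
    (h5 : ipT (ga - gb) (ga - gb) ≤ K * ipT (a - b) (a - b)) :
    ipT (d - z) (d - z) ≤ ipT (a - z) (a - z) - (1 - 2 * t ^ 2 * K) * ipT (a - b) (a - b)
      - 1 / 2 * ipT (b - d) (b - d) := by
  have h6 := ipT_self_nonneg ((2 * t) • (gb - ga) - (d - b))
  have h7 : t * (ipT (gb - gz) (b - z) + ipT gz (b - z)) ≤ 0 :=
    mul_nonpos_of_nonneg_of_nonpos ht.le (by linarith)
  have h8 := mul_le_mul_of_nonneg_left h5 (sq_nonneg t)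
  simp only [ipT_add_l, ipT_sub_l, ipT_smul_l, ipT_sub_r, ipT_smul_r] at *
  simp only [ipT_comm' b a, ipT_comm' d a, ipT_comm' z a, ipT_comm' d b, ipT_comm' z b,
    ipT_comm' z d, ipT_comm' gb ga] at *
  simp only [ipT_comm' b ga, ipT_comm' d ga, ipT_comm' b gb, ipT_comm' d gb] at *
  nlinarith
end

/-- for 0 < t < (√2·L)⁻¹ the series Σ‖y_s − ŷ_s‖² and Σ‖ŷ_s − y_{s+1}‖²
converge; in particular ‖y_s − ŷ_s‖ → 0 and ‖ŷ_s − y_{s+1}‖ → 0. -/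
theorem stmt15 {n m : ℕ} (hn : 0 < n) (hm : 0 < m)
    (A : Matrix (Fin n) (Fin n) ℝ) (B : Matrix (Fin m) (Fin n) ℝ)
    (p c : Vec n → Vec n) (r : Vec m → Vec m)
    (L : ℝ)
    (hmono : ∀ y₁ ∈ Om n m, ∀ y₂ ∈ Om n m,
      ipT (gOp A B p c r y₁ - gOp A B p c r y₂) (y₁ - y₂) ≤ 0)
    (hlip : ∀ y₁ ∈ Om n m, ∀ y₂ ∈ Om n m,
      nrmT (gOp A B p c r y₁ - gOp A B p c r y₂) ≤ L * nrmT (y₁ - y₂))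
    (ys : Triple n m) (hys : ys ∈ Om n m)
    (hVI : ∀ y ∈ Om n m, ipT (gOp A B p c r ys) (y - ys) ≤ 0)
    (t : ℝ) (ht0 : 0 < t) (ht1 : t < (Real.sqrt 2 * L)⁻¹)
    (y yh : ℕ → Triple n m) (hy0 : y 0 ∈ Om n m)
    (hyh : ∀ s : ℕ, yh s = projOm (y s + t • gOp A B p c r (y s)))
    (hiter : ∀ s : ℕ, y (s + 1) = projOm (y s + t • gOp A B p c r (yh s))) :
    Summable (fun s : ℕ => nrmT (y s - yh s) ^ 2) ∧
    Summable (fun s : ℕ => nrmT (yh s - y (s + 1)) ^ 2) ∧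
    Tendsto (fun s : ℕ => nrmT (y s - yh s)) atTop (nhds 0) ∧
    Tendsto (fun s : ℕ => nrmT (yh s - y (s + 1))) atTop (nhds 0) := by
  set g := gOp A B p c r with hg
  have hL : 0 < Real.sqrt 2 * L := inv_pos.mp (ht0.trans ht1)
  have hL0 : 0 < L := pos_of_mul_pos_right hL (Real.sqrt_nonneg 2)
  have hK : 0 < 1 - 2 * t ^ 2 * L ^ 2 := by
    have h1 : t * (Real.sqrt 2 * L) < 1 := (lt_inv_mul_iff₀' hL).mp (by simpa using ht1)
    have h0 : 0 < t * (Real.sqrt 2 * L) := mul_pos ht0 hL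
    have h2 : (t * (Real.sqrt 2 * L)) ^ 2 < 1 := by nlinarith
    have h3 : (t * (Real.sqrt 2 * L)) ^ 2 = 2 * t ^ 2 * L ^ 2 := by
      rw [mul_pow, mul_pow, Real.sq_sqrt (by norm_num)]; ring
    linarith
  have hyM : ∀ s, y s ∈ Om n m := by
    intro s
    cases s with
    | zero => exact hy0
    | succ s => rw [hiter]; exact projOm_mem _
  have hyhM : ∀ s, yh s ∈ Om n m := fun s => by rw [hyh]; exact projOm_mem _
  have hstep : ∀ s, ipT (y (s + 1) - ys) (y (s + 1) - ys) ≤ ipT (y s - ys) (y s - ys)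
      - (1 - 2 * t ^ 2 * L ^ 2) * ipT (y s - yh s) (y s - yh s)
      - 1 / 2 * ipT (yh s - y (s + 1)) (yh s - y (s + 1)) := by
    intro s
    refine step_ineq (y s) (yh s) (y (s + 1)) ys (g (y s)) (g (yh s)) (g ys) t (L ^ 2) ht0
      ?_ ?_ (hmono _ (hyhM s) _ hys) (hVI _ (hyhM s)) ?_
    · have := ipT_proj (y s + t • g (yh s)) ys hys
      rwa [← hiter] at this
    · have := ipT_proj (y s + t • g (y s)) (y (s + 1)) (hyM _)
      rwa [← hyh] at this
    · rw [← nrmT_sq, ← nrmT_sq, ← mul_pow]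
      exact pow_le_pow_left₀ (Real.sqrt_nonneg _) (hlip _ (hyM s) _ (hyhM s)) 2
  have hsum : ∀ N, ∑ s ∈ Finset.range N,
      ((1 - 2 * t ^ 2 * L ^ 2) * ipT (y s - yh s) (y s - yh s)
      + 1 / 2 * ipT (yh s - y (s + 1)) (yh s - y (s + 1)))
      ≤ ipT (y 0 - ys) (y 0 - ys) - ipT (y N - ys) (y N - ys) := by
    intro N
    induction N with
    | zero => simp
    | succ N ih => rw [Finset.sum_range_succ]; linarith [hstep N]
  have hS : Summable (fun s => (1 - 2 * t ^ 2 * L ^ 2) * ipT (y s - yh s) (y s - yh s)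
      + 1 / 2 * ipT (yh s - y (s + 1)) (yh s - y (s + 1))) := by
    refine summable_of_sum_range_le (c := ipT (y 0 - ys) (y 0 - ys)) (fun s => ?_) (fun N => ?_)
    · have h1 := mul_nonneg hK.le (ipT_self_nonneg (y s - yh s))
      have h2 := ipT_self_nonneg (yh s - y (s + 1))
      linarith
    · linarith [hsum N, ipT_self_nonneg (y N - ys)]
  have hS1 : Summable (fun s : ℕ => nrmT (y s - yh s) ^ 2) := by
    rw [← summable_mul_left_iff hK.ne']
    refine Summable.of_nonneg_of_le (fun s => mul_nonneg hK.le (sq_nonneg _)) (fun s => ?_) hS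
    rw [nrmT_sq]
    linarith [ipT_self_nonneg (yh s - y (s + 1))]
  have hS2 : Summable (fun s : ℕ => nrmT (yh s - y (s + 1)) ^ 2) := by
    rw [← summable_mul_left_iff (one_half_pos (α := ℝ)).ne']
    refine Summable.of_nonneg_of_le (fun s => by positivity) (fun s => ?_) hS
    rw [nrmT_sq]
    linarith [mul_nonneg hK.le (ipT_self_nonneg (y s - yh s))]
  have key : ∀ f : ℕ → Triple n m, Summable (fun s => nrmT (f s) ^ 2) →
      Tendsto (fun s => nrmT (f s)) atTop (nhds 0) := by
    intro f hf
    have := (Real.continuous_sqrt.tendsto 0).comp hf.tendsto_atTop_zero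
    rw [Real.sqrt_zero] at this
    refine this.congr fun s => ?_
    exact Real.sqrt_sq (Real.sqrt_nonneg _)
  exact ⟨hS1, hS2, key _ hS1, key _ hS2⟩
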